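/- arXiv:2602.04424 — 13 statements merged into one kernel-verified Lean document; each statement's English description precedes it below -/
import Mathlib

section
/- Let (x,y) ∈ ρ_B(T) and let w ∈ dom(T). Then T(R_{x,y}w) = R_{x,y}(Tw) if and only if there exists v ∈ dom(T³) ∩ B with Tv ∈ B such that w = Q_{x,y}v. -/
/-- `dom (T²)`: the elements of the domain `D` of `T` whose image lies again in `D`. -/
def dom2 {V : Type*} (T : V → V) (D : Set V) : Set V := {u | u ∈ D ∧ T u ∈ D}

/-- `dom (T³)`. -/
def dom3 {V : Type*} (T : V → V) (D : Set V) : Set V := {u | u ∈ dom2 T D ∧ T u ∈ dom2 T D}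

/-- `dom_B (T²) = dom(T²) ∩ B`. -/
def domB2 {V : Type*} (T : V → V) (D Bc : Set V) : Set V := dom2 T D ∩ Bc

/-- The operator `Q_{x,y} u = T²u − 2x Tu + (x² + y²) u`. -/
noncomputable def Qop {V : Type*} [AddCommGroup V] [Module ℝ V]
    (T : V → V) (x y : ℝ) (u : V) : V :=
  T (T u) - (2 * x) • T u + (x ^ 2 + y ^ 2) • u

/-- `R` is a bounded (everywhere-defined) operator which is a two-sided inverse
of `Q_{x,y} : dom_B(T²) → V`; in particular `Q_{x,y}` is bijective from `dom_B(T²)` onto `V`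
with bounded inverse `R`. -/
def IsInv {V : Type*} [NormedAddCommGroup V] [NormedSpace ℝ V]
    (T : V → V) (D Bc : Set V) (x y : ℝ) (R : V →L[ℝ] V) : Prop :=
  (∀ v : V, R v ∈ domB2 T D Bc) ∧ (∀ v : V, Qop T x y (R v) = v) ∧
    (∀ u ∈ domB2 T D Bc, R (Qop T x y u) = u)

/-- The resolvent set `ρ_B(T) ⊆ ℝ²`. -/
def rhoB {V : Type*} [NormedAddCommGroup V] [NormedSpace ℝ V]
    (T : V → V) (D Bc : Set V) : Set (ℝ × ℝ) :=
  {p | ∃ R : V →L[ℝ] V, IsInv T D Bc p.1 p.2 R}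

/-- On `dom (T³)` the operators `T` and `Q_{x,y}` commute. -/
theorem map_Qop_of_mem_dom3 {V : Type*} [AddCommGroup V] [Module ℝ V]
    (T : V → V) (D : Submodule ℝ V)
    (hTadd : ∀ u ∈ D, ∀ v ∈ D, T (u + v) = T u + T v)
    (hTsmul : ∀ (c : ℝ), ∀ u ∈ D, T (c • u) = c • T u)
    (x y : ℝ) {v : V} (hv : v ∈ dom3 T (D : Set V)) :
    T (Qop T x y v) = Qop T x y (T v) := by
  obtain ⟨⟨hv₀, hv₁⟩, -, hv₂⟩ := hv
  have hv₁' : (-(2 * x)) • T v ∈ D := D.smul_mem _ hv₁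
  rw [Qop, Qop, sub_eq_add_neg, ← neg_smul,
    hTadd _ (D.add_mem hv₂ hv₁') _ (D.smul_mem _ hv₀), hTadd _ hv₂ _ hv₁',
    hTsmul _ _ hv₁, hTsmul _ _ hv₀, neg_smul, ← sub_eq_add_neg]

/-- for `(x,y) ∈ ρ_B(T)` with pseudo-resolvent `R = R_{x,y}` and `w ∈ dom(T)`,
`T` and `R_{x,y}` commute at `w` iff `w = Q_{x,y} v` for some `v ∈ dom(T³) ∩ B` with `Tv ∈ B`. -/
theorem stmt0 {V : Type*} [NormedAddCommGroup V] [NormedSpace ℝ V] [CompleteSpace V]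
    (T : V → V) (D Bc : Submodule ℝ V) (hBD : (Bc : Set V) ⊆ (D : Set V))
    (hTadd : ∀ u ∈ D, ∀ v ∈ D, T (u + v) = T u + T v)
    (hTsmul : ∀ (c : ℝ), ∀ u ∈ D, T (c • u) = c • T u)
    (hTclosed : IsClosed {p : V × V | p.1 ∈ D ∧ p.2 = T p.1})
    (x y : ℝ) (R : V →L[ℝ] V) (hR : IsInv T (D : Set V) (Bc : Set V) x y R)
    (w : V) (hw : w ∈ D) :
    T (R w) = R (T w) ↔
      ∃ v, v ∈ dom3 T (D : Set V) ∧ v ∈ Bc ∧ T v ∈ Bc ∧ w = Qop T x y v := by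
  obtain ⟨hmem, hright, hleft⟩ := hR
  constructor
  · intro h
    obtain ⟨hdom, hB⟩ := hmem w
    obtain ⟨hdom', hB'⟩ := hmem (T w)
    rw [← h] at hdom' hB'
    exact ⟨R w, ⟨hdom, hdom'⟩, hB, hB', (hright w).symm⟩
  · rintro ⟨v, hv, hvB, hTvB, rfl⟩
    rw [map_Qop_of_mem_dom3 T D hTadd hTsmul x y hv, hleft v ⟨hv.1, hvB⟩,
      hleft (T v) ⟨hv.2, hTvB⟩]
end

section
/- Let (a,b) ∈ ρ_B(T) and let 0 < ε < 1/(‖T∘R_{a,b}‖ + ‖R_{a,b}‖). For (x,y) ∈ ℝ² define the operator Λ_{x,y} : dom(T) → V by Λ_{x,y}u := 2(x−a)·Tu + ((a²+b²) − (x²+y²))·u. Then for every (x,y) ∈ ℝ² with max{2|x−a|, |(x²+y²)−(a²+b²)|} ≤ ε one has: ‖Λ_{x,y}∘R_{a,b}‖ ≤ ε(‖T∘R_{a,b}‖ + ‖R_{a,b}‖) < 1, the pair (x,y) belongs to ρ_B(T), and R_{x,y} = Σ_{n=0}^∞ R_{a,b}∘(Λ_{x,y}∘R_{a,b})ⁿ,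 where the series converges in operator norm, uniformly for (x,y) in this set. -/
/-- The operator `Λ_{x,y} ∘ R_{a,b}`, where `Λ_{x,y}u = 2(x−a)Tu + ((a²+b²)−(x²+y²))u` and
`TR = T ∘ R_{a,b}`, `R = R_{a,b}`. -/
noncomputable def LamR {V : Type*} [NormedAddCommGroup V] [NormedSpace ℝ V]
    (TR R : V →L[ℝ] V) (a b : ℝ) (p : ℝ × ℝ) : V →L[ℝ] V :=
  (2 * (p.1 - a)) • TR + ((a ^ 2 + b ^ 2) - (p.1 ^ 2 + p.2 ^ 2)) • R

/-- `Q_{x,y} ∘ R_{a,b} = 1 - Λ_{x,y} ∘ R_{a,b}`. -/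
theorem Qop_apply_of_rightInverse {V : Type*} [NormedAddCommGroup V] [NormedSpace ℝ V]
    {T : V → V} {a b : ℝ} {R TR : V →L[ℝ] V} (hR : ∀ v, Qop T a b (R v) = v)
    (hTR : ∀ v, TR v = T (R v)) (p : ℝ × ℝ) (w : V) :
    Qop T p.1 p.2 (R w) = (1 - LamR TR R a b p) w := by
  have h := hR w
  simp only [Qop, LamR, sub_apply, add_apply, smul_apply, one_apply_eq_self, hTR] at h ⊢
  linear_combination (norm := module) h

/-- If `N` is a two-sided inverse of `1 - Λ_{x,y} ∘ R_{a,b}`, then `R_{a,b} ∘ N` inverts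
`Q_{x,y}`. -/
theorem IsInv.comp_inverse {V : Type*} [NormedAddCommGroup V] [NormedSpace ℝ V]
    {T : V → V} {D Bc : Set V} {a b : ℝ} {R TR : V →L[ℝ] V} (hR : IsInv T D Bc a b R)
    (hTR : ∀ v, TR v = T (R v)) (p : ℝ × ℝ) {N : V →L[ℝ] V}
    (hleft : N * (1 - LamR TR R a b p) = 1) (hright : (1 - LamR TR R a b p) * N = 1) :
    IsInv T D Bc p.1 p.2 (R * N) := by
  obtain ⟨hmem, hQR, hRQ⟩ := hR
  refine ⟨fun v => hmem (N v), fun v => ?_, fun u hu => ?_⟩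
  · rw [mul_apply_eq_comp, Qop_apply_of_rightInverse hQR hTR,
      ← mul_apply_eq_comp, hright, one_apply_eq_self]
  · have hQ := Qop_apply_of_rightInverse hQR hTR p (Qop T a b u)
    rw [hRQ u hu] at hQ
    rw [hQ, mul_apply_eq_comp, ← mul_apply_eq_comp N, hleft, one_apply_eq_self,
      hRQ u hu]

theorem norm_LamR_le {V : Type*} [NormedAddCommGroup V] [NormedSpace ℝ V]
    (TR R : V →L[ℝ] V) {a b ε : ℝ} {p : ℝ × ℝ}
    (hp : max (2 * |p.1 - a|) |(p.1 ^ 2 + p.2 ^ 2) - (a ^ 2 + b ^ 2)| ≤ ε) :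
    ‖LamR TR R a b p‖ ≤ ε * (‖TR‖ + ‖R‖) := by
  obtain ⟨h₁, h₂⟩ := max_le_iff.mp hp
  rw [mul_add]
  refine (norm_add_le _ _).trans (add_le_add ?_ ?_)
  · rw [norm_smul, Real.norm_eq_abs, abs_mul, abs_two]
    gcongr
  · rw [norm_smul, Real.norm_eq_abs, abs_sub_comm]
    gcongr

theorem ContinuousLinearMap.norm_comp_pow_le {V : Type*} [NormedAddCommGroup V]
    [NormedSpace ℝ V] (R : V →L[ℝ] V) {L : V →L[ℝ] V} {r : ℝ} (hL : ‖L‖ ≤ r) (n : ℕ) :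
    ‖R.comp (L ^ n)‖ ≤ ‖R‖ * r ^ n := by
  induction n with
  | zero => simp [ContinuousLinearMap.one_def]
  | succ n ih =>
    calc ‖R.comp (L ^ (n + 1))‖ = ‖(R.comp (L ^ n)).comp L‖ := by rw [pow_succ]; rfl
      _ ≤ ‖R.comp (L ^ n)‖ * ‖L‖ := ContinuousLinearMap.opNorm_comp_le _ _
      _ ≤ (‖R‖ * r ^ n) * r :=
        mul_le_mul ih hL (norm_nonneg _) ((norm_nonneg _).trans ih)
      _ = ‖R‖ * r ^ (n + 1) := by ring

/-- the Neumann-type series for the pseudo-resolvent with boundary conditions. -/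
theorem stmt1 {V : Type*} [NormedAddCommGroup V] [NormedSpace ℝ V] [CompleteSpace V]
    (T : V → V) (D Bc : Submodule ℝ V) (hBD : (Bc : Set V) ⊆ (D : Set V))
    (hTadd : ∀ u ∈ D, ∀ v ∈ D, T (u + v) = T u + T v)
    (hTsmul : ∀ (c : ℝ), ∀ u ∈ D, T (c • u) = c • T u)
    (hTclosed : IsClosed {p : V × V | p.1 ∈ D ∧ p.2 = T p.1})
    (a b : ℝ) (R TR : V →L[ℝ] V)
    (hR : IsInv T (D : Set V) (Bc : Set V) a b R)
    (hTR : ∀ v : V, TR v = T (R v))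
    (ε : ℝ) (hε0 : 0 < ε) (hε : ε < 1 / (‖TR‖ + ‖R‖)) :
    (∀ p : ℝ × ℝ,
        max (2 * |p.1 - a|) |(p.1 ^ 2 + p.2 ^ 2) - (a ^ 2 + b ^ 2)| ≤ ε →
        (‖LamR TR R a b p‖ ≤ ε * (‖TR‖ + ‖R‖) ∧ ε * (‖TR‖ + ‖R‖) < 1) ∧
          p ∈ rhoB T (D : Set V) (Bc : Set V) ∧
          IsInv T (D : Set V) (Bc : Set V) p.1 p.2
            (∑' n : ℕ, R.comp ((LamR TR R a b p) ^ n))) ∧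
      TendstoUniformlyOn
        (fun (N : ℕ) (p : ℝ × ℝ) => ∑ n ∈ Finset.range N, R.comp ((LamR TR R a b p) ^ n))
        (fun p : ℝ × ℝ => ∑' n : ℕ, R.comp ((LamR TR R a b p) ^ n))
        Filter.atTop
        {p : ℝ × ℝ | max (2 * |p.1 - a|) |(p.1 ^ 2 + p.2 ^ 2) - (a ^ 2 + b ^ 2)| ≤ ε} := by
  have hpos : 0 < ‖TR‖ + ‖R‖ := one_div_pos.mp (hε0.trans hε)
  have hlt : ε * (‖TR‖ + ‖R‖) < 1 := (lt_div_iff₀ hpos).mp hε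
  refine ⟨fun p hp => ?_, ?_⟩
  · have hL := norm_LamR_le TR R hp
    have hL1 := hL.trans_lt hlt
    have hInv : IsInv T (D : Set V) (Bc : Set V) p.1 p.2
        (∑' n : ℕ, R.comp ((LamR TR R a b p) ^ n)) := by
      have hsum := (summable_geometric_of_norm_lt_one hL1).tsum_mul_left R
      have := hR.comp_inverse hTR p (geom_series_mul_neg _ hL1) (mul_neg_geom_series _ hL1)
      rwa [← hsum] at this
    exact ⟨⟨hL, hlt⟩, ⟨_, hInv⟩, hInv⟩
  · exact tendstoUniformlyOn_tsum_nat
      ((summable_geometric_of_lt_one (by positivity) hlt).mul_left ‖R‖)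
      fun n p hp => R.norm_comp_pow_le (norm_LamR_le TR R hp) n
end

section
/- The set ρ_B(T) is an open subset of ℝ². -/
/-- A closed linear operator composed with a bounded operator that maps into its domain is bounded,
by the closed graph theorem. -/
theorem exists_clm_comp_of_isClosed_graph {V : Type*} [NormedAddCommGroup V] [NormedSpace ℝ V]
    [CompleteSpace V] (T : V → V) (D : Submodule ℝ V)
    (hTadd : ∀ u ∈ D, ∀ v ∈ D, T (u + v) = T u + T v)
    (hTsmul : ∀ (c : ℝ), ∀ u ∈ D, T (c • u) = c • T u)
    (hTclosed : IsClosed {p : V × V | p.1 ∈ D ∧ p.2 = T p.1})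
    (R : V →L[ℝ] V) (hR : ∀ v, R v ∈ D) : ∃ S : V →L[ℝ] V, ∀ v, S v = T (R v) := by
  let S : V →ₗ[ℝ] V :=
    { toFun := fun v => T (R v)
      map_add' := fun u v => by rw [map_add, hTadd _ (hR u) _ (hR v)]
      map_smul' := fun c v => by rw [map_smul, hTsmul c _ (hR v), RingHom.id_apply] }
  have hgraph : IsClosed (S.graph : Set (V × V)) := by
    have hpre : (S.graph : Set (V × V)) =
        (fun q : V × V => (R q.1, q.2)) ⁻¹' {p : V × V | p.1 ∈ D ∧ p.2 = T p.1} := by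
      ext q
      simp [LinearMap.mem_graph_iff, S, hR]
    rw [hpre]
    exact hTclosed.preimage (by fun_prop)
  exact ⟨⟨S, S.continuous_of_isClosed_graph hgraph⟩, fun _ => rfl⟩

/-- The dependence of `Q_{x,y}` on the parameters. -/
theorem Qop_eq_Qop_add {V : Type*} [AddCommGroup V] [Module ℝ V] (T : V → V)
    (x y x' y' : ℝ) (u : V) :
    Qop T x' y' u = Qop T x y u + (2 * (x - x')) • T u
      + (x' ^ 2 + y' ^ 2 - (x ^ 2 + y ^ 2)) • u := by
  unfold Qop
  module

/-- If `Q_{x',y'} R` is an invertible bounded operator, where `R` is the bounded inverse of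
`Q_{x,y}`, then `Q_{x',y'}` has a bounded inverse. -/
theorem IsInv.mul_inv {V : Type*} [NormedAddCommGroup V] [NormedSpace ℝ V]
    {T : V → V} {D Bc : Set V} {x y x' y' : ℝ} {R : V →L[ℝ] V} (hR : IsInv T D Bc x y R)
    (A : (V →L[ℝ] V)ˣ) (hA : ∀ v, Qop T x' y' (R v) = (A : V →L[ℝ] V) v) :
    IsInv T D Bc x' y' (R * (↑A⁻¹ : V →L[ℝ] V)) := by
  obtain ⟨hmem, -, hleft⟩ := hR
  refine ⟨fun v => hmem _, fun v => ?_, fun u hu => ?_⟩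
  · rw [mul_apply_eq_comp, hA, ← mul_apply_eq_comp, A.mul_inv,
      one_apply_eq_self]
  · have hQ : Qop T x' y' u = (A : V →L[ℝ] V) (Qop T x y u) := by rw [← hA, hleft u hu]
    rw [hQ, mul_apply_eq_comp, ← mul_apply_eq_comp (↑A⁻¹ : V →L[ℝ] V),
      A.inv_mul, one_apply_eq_self, hleft u hu]

/-- `ρ_B(T)` is open in `ℝ²`. -/
theorem stmt2 {V : Type*} [NormedAddCommGroup V] [NormedSpace ℝ V] [CompleteSpace V]
    (T : V → V) (D Bc : Submodule ℝ V) (hBD : (Bc : Set V) ⊆ (D : Set V))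
    (hTadd : ∀ u ∈ D, ∀ v ∈ D, T (u + v) = T u + T v)
    (hTsmul : ∀ (c : ℝ), ∀ u ∈ D, T (c • u) = c • T u)
    (hTclosed : IsClosed {p : V × V | p.1 ∈ D ∧ p.2 = T p.1}) :
    IsOpen (rhoB T (D : Set V) (Bc : Set V)) := by
  rw [isOpen_iff_mem_nhds]
  rintro ⟨x, y⟩ ⟨R, hR⟩
  obtain ⟨S, hS⟩ := exists_clm_comp_of_isClosed_graph T D hTadd hTsmul hTclosed R
    fun v => hBD (hR.1 v).2
  let F : ℝ × ℝ → V →L[ℝ] V := fun q =>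
    1 + (2 * (x - q.1)) • S + (q.1 ^ 2 + q.2 ^ 2 - (x ^ 2 + y ^ 2)) • R
  have hF : Continuous F := by fun_prop
  have hFxy : IsUnit (F (x, y)) := by simp [F]
  filter_upwards [(Units.isOpen.preimage hF).mem_nhds hFxy] with q hq
  obtain ⟨A, hA⟩ := hq
  refine ⟨_, hR.mul_inv A fun v => ?_⟩
  rw [hA, Qop_eq_Qop_add T x y, hR.2.1]
  simp [F, hS]
end

section
/- The map (x,y) ↦ T∘R_{x,y}, from ρ_B(T) to the Banach space of bounded linear operators on V equipped with the operator norm, is continuous. -/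
open Filter Topology

/-- Resolvent identity: an inverse at `(x', y')` factors through the inverse at `(x, y)`. -/
theorem IsInv.apply_eq {V : Type*} [NormedAddCommGroup V] [NormedSpace ℝ V]
    {T : V → V} {D Bc : Set V} {x y x' y' : ℝ} {R R' : V →L[ℝ] V}
    (h : IsInv T D Bc x y R) (h' : IsInv T D Bc x' y' R') (v : V) :
    R' v = R (v + ((2 * (x' - x)) • T (R' v) + (x ^ 2 + y ^ 2 - (x' ^ 2 + y' ^ 2)) • R' v)) := by
  have hQ : v + ((2 * (x' - x)) • T (R' v) + (x ^ 2 + y ^ 2 - (x' ^ 2 + y' ^ 2)) • R' v)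
      = Qop T x y (R' v) := by
    nth_rewrite 1 [← h'.2.1 v]
    simp only [Qop]
    module
  rw [hQ, h.2.2 _ (h'.1 v)]

/-- If `R'` and `S'` are obtained from `R` and `S` by composing with the perturbation
`1 + a • S' + c • R'` of the identity, then `S'` is close to `S` for small `a` and `c`. -/
theorem norm_sub_le_of_eq_comp_one_add {V : Type*} [NormedAddCommGroup V] [NormedSpace ℝ V]
    {R S R' S' : V →L[ℝ] V} {a c : ℝ}
    (hR : R' = R ∘L (1 + (a • S' + c • R'))) (hS : S' = S ∘L (1 + (a • S' + c • R')))
    (hsmall : (‖R‖ + ‖S‖) * (|a| + |c|) ≤ 1 / 2) :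
    ‖S' - S‖ ≤ 2 * (‖R‖ + ‖S‖) ^ 2 * (|a| + |c|) := by
  set E := a • S' + c • R'
  have hE : ‖E‖ ≤ (|a| + |c|) * (‖R'‖ + ‖S'‖) := by
    have h1 : ‖E‖ ≤ |a| * ‖S'‖ + |c| * ‖R'‖ :=
      (norm_add_le _ _).trans (by simp [norm_smul])
    nlinarith [mul_nonneg (abs_nonneg a) (norm_nonneg R'),
      mul_nonneg (abs_nonneg c) (norm_nonneg S')]
  have key : ∀ A A' : V →L[ℝ] V, A' = A ∘L (1 + E) → ‖A' - A‖ ≤ ‖A‖ * ‖E‖ := by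
    intro A A' h
    have : A' - A = A ∘L E := by
      rw [h]; ext v; simp
    rw [this]
    exact A.opNorm_comp_le E
  have hR1 : ‖R'‖ ≤ ‖R‖ + ‖R‖ * ‖E‖ := by
    linarith [key R R' hR, norm_sub_norm_le R' R]
  have hS1 : ‖S'‖ ≤ ‖S‖ + ‖S‖ * ‖E‖ := by
    linarith [key S S' hS, norm_sub_norm_le S' S]
  have hK : 0 ≤ ‖R‖ + ‖S‖ := by positivity
  have hN : 0 ≤ ‖R'‖ + ‖S'‖ := by positivity
  have he : 0 ≤ |a| + |c| := by positivity
  have hN2 : ‖R'‖ + ‖S'‖ ≤ 2 * (‖R‖ + ‖S‖) := by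
    have h1 := mul_le_mul_of_nonneg_left hE hK
    have h2 := mul_le_mul_of_nonneg_right hsmall hN
    nlinarith
  calc ‖S' - S‖ ≤ ‖S‖ * ‖E‖ := key S S' hS
    _ ≤ (‖R‖ + ‖S‖) * ((|a| + |c|) * (2 * (‖R‖ + ‖S‖))) := by
        gcongr
        · linarith [norm_nonneg R]
        · exact hE.trans (by gcongr)
    _ = 2 * (‖R‖ + ‖S‖) ^ 2 * (|a| + |c|) := by ring

/-- `(x,y) ↦ T ∘ R_{x,y}` is continuous on `ρ_B(T)` in operator norm. -/
theorem stmt4 {V : Type*} [NormedAddCommGroup V] [NormedSpace ℝ V] [CompleteSpace V]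
    (T : V → V) (D Bc : Submodule ℝ V) (hBD : (Bc : Set V) ⊆ (D : Set V))
    (hTadd : ∀ u ∈ D, ∀ v ∈ D, T (u + v) = T u + T v)
    (hTsmul : ∀ (c : ℝ), ∀ u ∈ D, T (c • u) = c • T u)
    (hTclosed : IsClosed {p : V × V | p.1 ∈ D ∧ p.2 = T p.1})
    (Rf TRf : ℝ × ℝ → V →L[ℝ] V)
    (hRf : ∀ p ∈ rhoB T (D : Set V) (Bc : Set V),
      IsInv T (D : Set V) (Bc : Set V) p.1 p.2 (Rf p))
    (hTRf : ∀ p ∈ rhoB T (D : Set V) (Bc : Set V), ∀ v : V, TRf p v = T (Rf p v)) :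
    ContinuousOn TRf (rhoB T (D : Set V) (Bc : Set V)) := by
  intro p hp
  have hlim : Tendsto (fun q : ℝ × ℝ ↦
      |2 * (q.1 - p.1)| + |p.1 ^ 2 + p.2 ^ 2 - (q.1 ^ 2 + q.2 ^ 2)|)
      (𝓝[rhoB T (D : Set V) (Bc : Set V)] p) (𝓝 0) := by
    have hc : Continuous (fun q : ℝ × ℝ ↦
        |2 * (q.1 - p.1)| + |p.1 ^ 2 + p.2 ^ 2 - (q.1 ^ 2 + q.2 ^ 2)|) := by fun_prop
    simpa using (hc.tendsto p).mono_left nhdsWithin_le_nhds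
  have hsmall := (hlim.const_mul (‖Rf p‖ + ‖TRf p‖)).eventually_le_const
    (show (‖Rf p‖ + ‖TRf p‖) * 0 < 1 / 2 by norm_num)
  have hbound := hlim.const_mul (2 * (‖Rf p‖ + ‖TRf p‖) ^ 2)
  rw [mul_zero] at hbound
  rw [ContinuousWithinAt, tendsto_iff_norm_sub_tendsto_zero]
  refine squeeze_zero' (Eventually.of_forall fun _ ↦ norm_nonneg _) ?_ hbound
  filter_upwards [hsmall, self_mem_nhdsWithin] with q hq hqρ
  have hid := (hRf p hp).apply_eq (hRf q hqρ)
  refine norm_sub_le_of_eq_comp_one_add (R := Rf p) (R' := Rf q) ?_ ?_ hq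
  · ext v
    simpa [hTRf q hqρ] using hid v
  · ext v
    have h := congrArg T (hid v)
    rw [← hTRf p hp, ← hTRf q hqρ] at h
    simpa using h
end

section
/- The map (x,y) ↦ R_{x,y}, from the open set ρ_B(T) ⊆ ℝ² to the Banach space of bounded linear operators on V, is continuously differentiable, and its partial derivatives (limits in operator norm) are given by ∂R_{x,y}/∂x = 2 R_{x,y}∘(T∘R_{x,y}) − 2x R_{x,y}∘R_{x,y} and ∂R_{x,y}/∂y = −2y R_{x,y}∘R_{x,y}. -/
open Topology

/-- The resolvent identity, evaluated at a vector. -/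
theorem IsInv.apply_sub_apply {V : Type*} [NormedAddCommGroup V] [NormedSpace ℝ V]
    {T : V → V} {D Bc : Set V} {p q : ℝ × ℝ} {R S : V →L[ℝ] V}
    (hR : IsInv T D Bc p.1 p.2 R) (hS : IsInv T D Bc q.1 q.2 S) (v : V) :
    S v - R v = R ((2 * (q.1 - p.1)) • T (S v) +
      (p.1 ^ 2 + p.2 ^ 2 - (q.1 ^ 2 + q.2 ^ 2)) • S v) := by
  have hu : R (Qop T p.1 p.2 (S v)) = S v := hR.2.2 _ (hS.1 v)
  have hv : Qop T q.1 q.2 (S v) = v := hS.2.1 v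
  have hQ : (2 * (q.1 - p.1)) • T (S v) + (p.1 ^ 2 + p.2 ^ 2 - (q.1 ^ 2 + q.2 ^ 2)) • S v
      = Qop T p.1 p.2 (S v) - Qop T q.1 q.2 (S v) := by
    simp only [Qop]
    module
  rw [hQ, map_sub, hu, hv]

/-- The perturbation `Q_p R_p - Q_q R_p` of the identity, as a bounded operator expressed through
`R = R_p` and `S = T R_p`. -/
noncomputable def resolventPerturbation {V : Type*} [NormedAddCommGroup V] [NormedSpace ℝ V]
    (R S : V →L[ℝ] V) (p q : ℝ × ℝ) : V →L[ℝ] V :=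
  (2 * (q.1 - p.1)) • S + (p.1 ^ 2 + p.2 ^ 2 - (q.1 ^ 2 + q.2 ^ 2)) • R

section

variable {V : Type*} [NormedAddCommGroup V] [NormedSpace ℝ V]

theorem resolventPerturbation_self (R S : V →L[ℝ] V) (p : ℝ × ℝ) :
    resolventPerturbation R S p p = 0 := by
  simp [resolventPerturbation]

theorem contDiff_resolventPerturbation (R S : V →L[ℝ] V) (p : ℝ × ℝ) :
    ContDiff ℝ 1 (resolventPerturbation R S p) := by
  unfold resolventPerturbation
  fun_prop

theorem hasFDerivAt_resolventPerturbation (R S : V →L[ℝ] V) (p : ℝ × ℝ) :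
    HasFDerivAt (resolventPerturbation R S p)
      ((ContinuousLinearMap.fst ℝ ℝ ℝ).smulRight ((2 : ℝ) • S - (2 * p.1) • R) +
        (ContinuousLinearMap.snd ℝ ℝ ℝ).smulRight ((-(2 * p.2)) • R)) p := by
  have h₁ : HasFDerivAt (fun q : ℝ × ℝ => q.1) (ContinuousLinearMap.fst ℝ ℝ ℝ) p := hasFDerivAt_fst
  have h₂ : HasFDerivAt (fun q : ℝ × ℝ => q.2) (ContinuousLinearMap.snd ℝ ℝ ℝ) p := hasFDerivAt_snd
  have hS := ((h₁.sub_const p.1).const_mul 2).smul_const S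
  have hR := (((h₁.pow 2).add (h₂.pow 2)).const_sub (p.1 ^ 2 + p.2 ^ 2)).smul_const R
  refine (hS.add hR).congr_fderiv ?_
  ext v
  all_goals
    simp
    try module

/-- The resolvent at `q` is the resolvent at `p` times the inverse of the perturbed identity. -/
theorem IsInv.eq_mul_inverse {T : V → V} {D Bc : Submodule ℝ V}
    (hTadd : ∀ u ∈ D, ∀ v ∈ D, T (u + v) = T u + T v) {p q : ℝ × ℝ} {R S TR TS : V →L[ℝ] V}
    (hR : IsInv T (D : Set V) (Bc : Set V) p.1 p.2 R)
    (hS : IsInv T (D : Set V) (Bc : Set V) q.1 q.2 S)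
    (hTR : ∀ v, TR v = T (R v)) (hTS : ∀ v, TS v = T (S v))
    (hunit : IsUnit (1 - resolventPerturbation R TR p q)) :
    S = R * Ring.inverse (1 - resolventPerturbation R TR p q) := by
  set W := resolventPerturbation S TS p q with hW
  have hSR : S = R * (1 + W) := by
    ext v
    have h := hR.apply_sub_apply hS v
    rw [← hTS, sub_eq_iff_eq_add'] at h
    simpa [hW, resolventPerturbation] using h
  have hTSR : TS = TR * (1 + W) := by
    ext v
    have h : S v = R v + R (W v) := by
      simpa using congrArg (fun A : V →L[ℝ] V => A v) hSR
    rw [hTS, h, hTadd _ (hR.1 v).1.1 _ (hR.1 (W v)).1.1, ← hTR, ← hTR]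
    simp
  have hmul : (1 - resolventPerturbation R TR p q) * (1 + W) = 1 := by
    have h : resolventPerturbation R TR p q * (1 + W) = W := by
      rw [hW, resolventPerturbation, add_mul, smul_mul_assoc, smul_mul_assoc, ← hW, ← hSR, ← hTSR]
      rfl
    rw [sub_mul, h]
    simp
  have hinv : 1 + W = Ring.inverse (1 - resolventPerturbation R TR p q) := by
    rw [← Ring.inverse_mul_cancel_left _ (1 + W) hunit, hmul, mul_one]
  rw [← hinv]
  exact hSR

end

/-- `(x,y) ↦ R_{x,y}` is continuously differentiable on the open set `ρ_B(T)`,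
with `∂R/∂x = 2 R∘(T∘R) − 2x R∘R` and `∂R/∂y = −2y R∘R`. -/
theorem stmt5 {V : Type*} [NormedAddCommGroup V] [NormedSpace ℝ V] [CompleteSpace V]
    (T : V → V) (D Bc : Submodule ℝ V) (hBD : (Bc : Set V) ⊆ (D : Set V))
    (hTadd : ∀ u ∈ D, ∀ v ∈ D, T (u + v) = T u + T v)
    (hTsmul : ∀ (c : ℝ), ∀ u ∈ D, T (c • u) = c • T u)
    (hTclosed : IsClosed {p : V × V | p.1 ∈ D ∧ p.2 = T p.1})
    (hopen : IsOpen (rhoB T (D : Set V) (Bc : Set V)))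
    (Rf TRf : ℝ × ℝ → V →L[ℝ] V)
    (hRf : ∀ p ∈ rhoB T (D : Set V) (Bc : Set V),
      IsInv T (D : Set V) (Bc : Set V) p.1 p.2 (Rf p))
    (hTRf : ∀ p ∈ rhoB T (D : Set V) (Bc : Set V), ∀ v : V, TRf p v = T (Rf p v)) :
    ContDiffOn ℝ 1 Rf (rhoB T (D : Set V) (Bc : Set V)) ∧
      ∀ p ∈ rhoB T (D : Set V) (Bc : Set V),
        HasFDerivAt Rf
          ((ContinuousLinearMap.fst ℝ ℝ ℝ).smulRight
              ((2 : ℝ) • ((Rf p).comp (TRf p)) - (2 * p.1) • ((Rf p).comp (Rf p))) +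
            (ContinuousLinearMap.snd ℝ ℝ ℝ).smulRight
              ((-(2 * p.2)) • ((Rf p).comp (Rf p)))) p := by
  have hunit₀ : ∀ p, 1 - resolventPerturbation (Rf p) (TRf p) p p
      = ((1 : (V →L[ℝ] V)ˣ) : V →L[ℝ] V) := fun p => by
    simp [resolventPerturbation_self]
  have hlocal : ∀ p ∈ rhoB T (D : Set V) (Bc : Set V), Rf =ᶠ[𝓝 p]
      fun q => Rf p * Ring.inverse (1 - resolventPerturbation (Rf p) (TRf p) p q) := by
    intro p hp
    have hcont : ContinuousAt (fun q => 1 - resolventPerturbation (Rf p) (TRf p) p q) p :=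
      (continuous_const.sub (contDiff_resolventPerturbation _ _ p).continuous).continuousAt
    have hunits : ∀ᶠ q in 𝓝 p, IsUnit (1 - resolventPerturbation (Rf p) (TRf p) p q) := by
      refine hcont.eventually ?_
      simp only [hunit₀]
      exact Units.nhds 1
    filter_upwards [hunits, hopen.mem_nhds hp] with q hq hqρ
    exact (hRf p hp).eq_mul_inverse hTadd (hRf q hqρ) (hTRf p hp) (hTRf q hqρ) hq
  refine ⟨fun p hp => ?_, fun p hp => ?_⟩
  · refine (ContDiffAt.congr_of_eventuallyEq ?_ (hlocal p hp)).contDiffWithinAt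
    have hinv : ContDiffAt ℝ 1 Ring.inverse
        (1 - resolventPerturbation (Rf p) (TRf p) p p) := by
      rw [hunit₀]
      exact contDiffAt_ringInverse ℝ 1
    have hperturb : ContDiffAt ℝ 1
        (fun q => 1 - resolventPerturbation (Rf p) (TRf p) p q) p :=
      contDiffAt_const.sub (contDiff_resolventPerturbation _ _ p).contDiffAt
    have hcomp := hinv.comp p hperturb
    exact contDiffAt_const.mul hcomp
  · have hinv : HasFDerivAt Ring.inverse (-ContinuousLinearMap.id ℝ (V →L[ℝ] V))
        (1 - resolventPerturbation (Rf p) (TRf p) p p) := by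
      rw [hunit₀]
      refine (hasFDerivAt_ringInverse (𝕜 := ℝ) (1 : (V →L[ℝ] V)ˣ)).congr_fderiv ?_
      ext A v
      simp
    have hderiv := (hinv.comp p
      ((hasFDerivAt_resolventPerturbation (Rf p) (TRf p) p).const_sub 1)).const_mul (Rf p)
    refine (hderiv.congr_of_eventuallyEq (hlocal p hp)).congr_fderiv ?_
    refine ContinuousLinearMap.ext fun h => ?_
    change Rf p * - -(h.1 • ((2 : ℝ) • TRf p - (2 * p.1) • Rf p) + h.2 • (-(2 * p.2)) • Rf p)
      = h.1 • ((2 : ℝ) • (Rf p * TRf p) - (2 * p.1) • (Rf p * Rf p))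
        + h.2 • (-(2 * p.2)) • (Rf p * Rf p)
    simp only [neg_neg, mul_add, mul_sub, mul_smul_comm]
end

section
/- The map (x,y) ↦ T∘R_{x,y}, from the open set ρ_B(T) ⊆ ℝ² to the Banach space of bounded linear operators on V, is continuously differentiable, and its partial derivatives (limits in operator norm) are given by ∂(T∘R_{x,y})/∂x = 2 (T∘R_{x,y})∘(T∘R_{x,y}) − 2x (T∘R_{x,y})∘R_{x,y} and ∂(T∘R_{x,y})/∂y = −2y (T∘R_{x,y})∘R_{x,y}. -/
/-- The operator `Q_q R_p`, for `R = R_p` and `S = T R_p`. -/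
noncomputable def resolventPencil {V : Type*} [NormedAddCommGroup V] [NormedSpace ℝ V]
    (R S : V →L[ℝ] V) (p q : ℝ × ℝ) : V →L[ℝ] V :=
  1 - (2 * (q.1 - p.1)) • S + (q.1 ^ 2 + q.2 ^ 2 - (p.1 ^ 2 + p.2 ^ 2)) • R

theorem contDiff_resolventPencil {V : Type*} [NormedAddCommGroup V] [NormedSpace ℝ V]
    (R S : V →L[ℝ] V) (p : ℝ × ℝ) : ContDiff ℝ 1 (resolventPencil R S p) := by
  unfold resolventPencil
  fun_prop

theorem resolventPencil_self {V : Type*} [NormedAddCommGroup V] [NormedSpace ℝ V]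
    (R S : V →L[ℝ] V) (p : ℝ × ℝ) : resolventPencil R S p p = 1 := by
  simp [resolventPencil]

theorem hasFDerivAt_resolventPencil {V : Type*} [NormedAddCommGroup V] [NormedSpace ℝ V]
    (R S : V →L[ℝ] V) (p : ℝ × ℝ) :
    HasFDerivAt (resolventPencil R S p)
      ((ContinuousLinearMap.fst ℝ ℝ ℝ).smulRight ((2 * p.1) • R - (2 : ℝ) • S) +
        (ContinuousLinearMap.snd ℝ ℝ ℝ).smulRight ((2 * p.2) • R)) p := by
  have h1 : HasFDerivAt (fun q : ℝ × ℝ => q.1) (ContinuousLinearMap.fst ℝ ℝ ℝ) p :=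
    hasFDerivAt_fst
  have h2 : HasFDerivAt (fun q : ℝ × ℝ => q.2) (ContinuousLinearMap.snd ℝ ℝ ℝ) p :=
    hasFDerivAt_snd
  have key := ((((h1.sub_const p.1).const_mul 2).smul_const S).const_sub 1).add
    ((((h1.pow 2).add (h2.pow 2)).sub_const (p.1 ^ 2 + p.2 ^ 2)).smul_const R)
  refine key.congr_fderiv ?_
  refine ContinuousLinearMap.ext fun q => ?_
  simp
  module

/-- First resolvent identity: `R_q = R_p ∘ (Q_p R_q)`. -/
theorem IsInv.apply_eq_s6 {V : Type*} [NormedAddCommGroup V] [NormedSpace ℝ V]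
    {T : V → V} {D Bc : Set V} {p q : ℝ × ℝ} {R R' S' : V →L[ℝ] V}
    (h : IsInv T D Bc p.1 p.2 R) (h' : IsInv T D Bc q.1 q.2 R')
    (hS' : ∀ v, S' v = T (R' v)) (v : V) :
    R (resolventPencil R' S' q p v) = R' v := by
  rw [← h.2.2 (R' v) (h'.1 v)]
  congr 1
  have hv : Qop T q.1 q.2 (R' v) = v := h'.2.1 v
  simp only [resolventPencil, add_apply, sub_apply,
    smul_apply, one_apply_eq_self, hS']
  unfold Qop at hv ⊢
  nth_rw 1 [← hv]
  module

/-- `T R_q = T R_p ∘ (Q_q R_p)⁻¹`. -/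
theorem eq_mul_inverse_resolventPencil {V : Type*} [NormedAddCommGroup V] [NormedSpace ℝ V]
    {T : V → V} {D Bc : Set V} {p q : ℝ × ℝ} {R R' S S' : V →L[ℝ] V}
    (h : IsInv T D Bc p.1 p.2 R) (h' : IsInv T D Bc q.1 q.2 R')
    (hS : ∀ v, S v = T (R v)) (hS' : ∀ v, S' v = T (R' v)) :
    S' = S * Ring.inverse (resolventPencil R S p q) := by
  have hR : ∀ v, R (resolventPencil R' S' q p v) = R' v := h.apply_eq_s6 h' hS'
  have hR' : ∀ v, R' (resolventPencil R S p q v) = R v := h'.apply_eq_s6 h hS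
  have hleft : resolventPencil R S p q * resolventPencil R' S' q p = 1 := by
    ext v
    rw [mul_apply_eq_comp, resolventPencil]
    simp only [add_apply, sub_apply,
      smul_apply, one_apply_eq_self, hS, hR]
    simp only [resolventPencil, add_apply, sub_apply,
      smul_apply, one_apply_eq_self, hS']
    module
  have hright : resolventPencil R' S' q p * resolventPencil R S p q = 1 := by
    ext v
    rw [mul_apply_eq_comp, resolventPencil]
    simp only [add_apply, sub_apply,
      smul_apply, one_apply_eq_self, hS', hR']
    simp only [resolventPencil, add_apply, sub_apply,
      smul_apply, one_apply_eq_self, hS]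
    module
  have hinv : Ring.inverse (resolventPencil R S p q) = resolventPencil R' S' q p :=
    Ring.inverse_unit ⟨_, _, hleft, hright⟩
  ext v
  rw [hinv, mul_apply_eq_comp, hS, hS', hR]

/-- `(x,y) ↦ T∘R_{x,y}` is continuously differentiable on the open set `ρ_B(T)`,
with `∂(T∘R)/∂x = 2 (T∘R)∘(T∘R) − 2x (T∘R)∘R` and `∂(T∘R)/∂y = −2y (T∘R)∘R`. -/
theorem stmt6 {V : Type*} [NormedAddCommGroup V] [NormedSpace ℝ V] [CompleteSpace V]
    (T : V → V) (D Bc : Submodule ℝ V) (hBD : (Bc : Set V) ⊆ (D : Set V))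
    (hTadd : ∀ u ∈ D, ∀ v ∈ D, T (u + v) = T u + T v)
    (hTsmul : ∀ (c : ℝ), ∀ u ∈ D, T (c • u) = c • T u)
    (hTclosed : IsClosed {p : V × V | p.1 ∈ D ∧ p.2 = T p.1})
    (hopen : IsOpen (rhoB T (D : Set V) (Bc : Set V)))
    (Rf TRf : ℝ × ℝ → V →L[ℝ] V)
    (hRf : ∀ p ∈ rhoB T (D : Set V) (Bc : Set V),
      IsInv T (D : Set V) (Bc : Set V) p.1 p.2 (Rf p))
    (hTRf : ∀ p ∈ rhoB T (D : Set V) (Bc : Set V), ∀ v : V, TRf p v = T (Rf p v)) :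
    ContDiffOn ℝ 1 TRf (rhoB T (D : Set V) (Bc : Set V)) ∧
      ∀ p ∈ rhoB T (D : Set V) (Bc : Set V),
        HasFDerivAt TRf
          ((ContinuousLinearMap.fst ℝ ℝ ℝ).smulRight
              ((2 : ℝ) • ((TRf p).comp (TRf p)) - (2 * p.1) • ((TRf p).comp (Rf p))) +
            (ContinuousLinearMap.snd ℝ ℝ ℝ).smulRight
              ((-(2 * p.2)) • ((TRf p).comp (Rf p)))) p := by
  have hloc : ∀ p ∈ rhoB T (D : Set V) (Bc : Set V), TRf =ᶠ[nhds p]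
      fun q => TRf p * Ring.inverse (resolventPencil (Rf p) (TRf p) p q) := fun p hp => by
    filter_upwards [hopen.mem_nhds hp] with q hq
    exact eq_mul_inverse_resolventPencil (hRf p hp) (hRf q hq) (hTRf p hp) (hTRf q hq)
  refine ⟨fun p hp => ContDiffAt.contDiffWithinAt ?_, fun p hp => ?_⟩
  · refine ContDiffAt.congr_of_eventuallyEq ?_ (hloc p hp)
    have hinv : ContDiffAt ℝ 1 Ring.inverse (resolventPencil (Rf p) (TRf p) p p) := by
      rw [resolventPencil_self]
      exact contDiffAt_ringInverse ℝ (1 : (V →L[ℝ] V)ˣ)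
    exact contDiffAt_const.mul (hinv.comp p (contDiff_resolventPencil _ _ p).contDiffAt)
  · refine HasFDerivAt.congr_of_eventuallyEq ?_ (hloc p hp)
    have hinv := hasFDerivAt_ringInverse (𝕜 := ℝ) (1 : (V →L[ℝ] V)ˣ)
    rw [Units.val_one, ← resolventPencil_self (Rf p) (TRf p) p] at hinv
    refine ((hinv.comp p (hasFDerivAt_resolventPencil (Rf p) (TRf p) p)).const_mul
      (TRf p)).congr_fderiv ?_
    refine ContinuousLinearMap.ext fun q => ?_
    change TRf p * -(((1 : (V →L[ℝ] V)ˣ)⁻¹ : (V →L[ℝ] V)ˣ) *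
        (q.1 • ((2 * p.1) • Rf p - (2 : ℝ) • TRf p) + q.2 • ((2 * p.2) • Rf p)) *
        ((1 : (V →L[ℝ] V)ˣ)⁻¹ : (V →L[ℝ] V)ˣ)) =
      q.1 • ((2 : ℝ) • (TRf p * TRf p) - (2 * p.1) • (TRf p * Rf p)) +
        q.2 • (-(2 * p.2)) • (TRf p * Rf p)
    rw [inv_one, Units.val_one, one_mul, mul_one, mul_neg, mul_add, mul_smul_comm, mul_sub,
      mul_smul_comm, mul_smul_comm, mul_smul_comm, mul_smul_comm]
    module
end

section
/- The S-resolvent set with boundary conditions ρ_{S,B}(T) is an open subset of ℍ, and it is axially symmetric: if s ∈ ρ_{S,B}(T), then every q ∈ ℍ with Re q = Re s and |q| = |s| also belongs to ρ_{S,B}(T). -/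
/-- A two-sided Banach module structure over the quaternions `ℍ = Quaternion ℝ` on a real
Banach space `V`: commuting left (`lm`) and right (`rm`) `ℍ`-module structures, compatible
with the real vector space structure, with a norm bound `‖a·v‖, ‖v·a‖ ≤ C|a|‖v‖`. -/
structure QuatBimodule (V : Type*) [NormedAddCommGroup V] [NormedSpace ℝ V] where
  /-- left multiplication `v ↦ a·v` (real-linear in `v`) -/
  lm : Quaternion ℝ → V →ₗ[ℝ] V
  /-- right multiplication `v ↦ v·a` (real-linear in `v`) -/
  rm : Quaternion ℝ → V →ₗ[ℝ] V
  lm_add : ∀ (a b : Quaternion ℝ) (v : V), lm (a + b) v = lm a v + lm b v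
  rm_add : ∀ (a b : Quaternion ℝ) (v : V), rm (a + b) v = rm a v + rm b v
  lm_mul : ∀ (a b : Quaternion ℝ) (v : V), lm (a * b) v = lm a (lm b v)
  rm_mul : ∀ (a b : Quaternion ℝ) (v : V), rm (a * b) v = rm b (rm a v)
  lm_rm_comm : ∀ (a b : Quaternion ℝ) (v : V), lm a (rm b v) = rm b (lm a v)
  lm_real : ∀ (r : ℝ) (v : V), lm (r : Quaternion ℝ) v = r • v
  rm_real : ∀ (r : ℝ) (v : V), rm (r : Quaternion ℝ) v = r • v
  bound : ∃ C : ℝ, ∀ (a : Quaternion ℝ) (v : V),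
    ‖lm a v‖ ≤ C * ‖a‖ * ‖v‖ ∧ ‖rm a v‖ ≤ C * ‖a‖ * ‖v‖

/-- The operator `Q_{s,B}[T] u = T²u − 2(Re s) Tu + |s|² u`. -/
noncomputable def Qq {V : Type*} [NormedAddCommGroup V] [NormedSpace ℝ V]
    (T : V → V) (s : Quaternion ℝ) (u : V) : V :=
  T (T u) - (2 * s.re) • T u + (‖s‖ ^ 2) • u

/-- `R` is a bounded two-sided inverse of `Q_{s,B}[T] : dom_B(T²) → V`. -/
def IsInvQ {V : Type*} [NormedAddCommGroup V] [NormedSpace ℝ V]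
    (T : V → V) (D Bc : Set V) (s : Quaternion ℝ) (R : V →L[ℝ] V) : Prop :=
  (∀ v : V, R v ∈ domB2 T D Bc) ∧ (∀ v : V, Qq T s (R v) = v) ∧
    (∀ u ∈ domB2 T D Bc, R (Qq T s u) = u)

/-- The `S`-resolvent set with boundary conditions `ρ_{S,B}(T) ⊆ ℍ`. -/
def rhoSB {V : Type*} [NormedAddCommGroup V] [NormedSpace ℝ V]
    (T : V → V) (D Bc : Set V) : Set (Quaternion ℝ) :=
  {s | ∃ R : V →L[ℝ] V, IsInvQ T D Bc s R}

/-- `v ↦ T (R v)` is bounded whenever `T` is a closed operator and the bounded operator `R`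
maps into its domain. -/
theorem exists_continuousLinearMap_comp_of_isClosed {V : Type*} [NormedAddCommGroup V]
    [NormedSpace ℝ V] [CompleteSpace V] (T : V → V) (D : Submodule ℝ V)
    (hTadd : ∀ u ∈ D, ∀ v ∈ D, T (u + v) = T u + T v)
    (hTsmul : ∀ (c : ℝ), ∀ u ∈ D, T (c • u) = c • T u)
    (hTclosed : IsClosed {p : V × V | p.1 ∈ D ∧ p.2 = T p.1})
    (R : V →L[ℝ] V) (hR : ∀ v, R v ∈ D) :
    ∃ A : V →L[ℝ] V, ∀ v, A v = T (R v) := by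
  let g : V →ₗ[ℝ] V :=
    { toFun := fun v => T (R v)
      map_add' := fun u v => by rw [map_add, hTadd _ (hR u) _ (hR v)]
      map_smul' := fun c v => by rw [map_smul, hTsmul _ _ (hR v), RingHom.id_apply] }
  have hg : IsClosed (g.graph : Set (V × V)) := by
    have hpre : (g.graph : Set (V × V)) =
        (fun p : V × V => (R p.1, p.2)) ⁻¹' {p : V × V | p.1 ∈ D ∧ p.2 = T p.1} := by
      ext p
      simp [g, LinearMap.mem_graph_iff, hR]
    rw [hpre]
    exact hTclosed.preimage (by fun_prop)
  exact ⟨ContinuousLinearMap.ofIsClosedGraph hg, fun v => rfl⟩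

/-- The perturbation identity: `Q_q` composed with `R` when `R` is a right inverse of `Q_s`. -/
theorem Qq_apply_of_Qq_eq {V : Type*} [NormedAddCommGroup V] [NormedSpace ℝ V]
    (T : V → V) (s q : Quaternion ℝ) {u v : V} (h : Qq T s u = v) :
    Qq T q u = v - (2 * (q.re - s.re)) • T u + (‖q‖ ^ 2 - ‖s‖ ^ 2) • u := by
  rw [← h]
  unfold Qq
  module

/-- `Q_s` depends only on `Re s` and `|s|`, hence so does membership in the resolvent set. -/
theorem mem_rhoSB_of_re_eq_of_norm_eq {V : Type*} [NormedAddCommGroup V] [NormedSpace ℝ V]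
    {T : V → V} {D Bc : Set V} {s q : Quaternion ℝ} (hs : s ∈ rhoSB T D Bc)
    (hre : q.re = s.re) (hnorm : ‖q‖ = ‖s‖) : q ∈ rhoSB T D Bc := by
  have hQ : Qq T q = Qq T s := by
    funext u
    simp only [Qq, hre, hnorm]
  simpa only [rhoSB, IsInvQ, Set.mem_ofPred_eq, hQ] using hs

/-- If `R` inverts `Q_s` and `M = Q_q R` is invertible, then `q` is in the resolvent set. -/
theorem mem_rhoSB_of_isUnit {V : Type*} [NormedAddCommGroup V] [NormedSpace ℝ V]
    {T : V → V} {D Bc : Set V} {s q : Quaternion ℝ} {R M : V →L[ℝ] V}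
    (hR : IsInvQ T D Bc s R) (hM : ∀ v, M v = Qq T q (R v)) (hunit : IsUnit M) :
    q ∈ rhoSB T D Bc := by
  obtain ⟨U, rfl⟩ := hunit
  obtain ⟨hdom, -, hleft⟩ := hR
  refine ⟨R * (↑U⁻¹ : V →L[ℝ] V), fun v => hdom _, fun v => ?_, fun u hu => ?_⟩
  · rw [mul_apply_eq_comp, ← hM, ← mul_apply_eq_comp, U.mul_inv,
      one_apply_eq_self]
  · have hu' : Qq T q u = (U : V →L[ℝ] V) (Qq T s u) := by rw [hM, hleft u hu]
    rw [hu', mul_apply_eq_comp, ← mul_apply_eq_comp _ (U : V →L[ℝ] V),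
      U.inv_mul, one_apply_eq_self, hleft u hu]

/-- The resolvent set of a closed operator is open. -/
theorem isOpen_rhoSB {V : Type*} [NormedAddCommGroup V] [NormedSpace ℝ V] [CompleteSpace V]
    (T : V → V) (D : Submodule ℝ V) (Bc : Set V)
    (hTadd : ∀ u ∈ D, ∀ v ∈ D, T (u + v) = T u + T v)
    (hTsmul : ∀ (c : ℝ), ∀ u ∈ D, T (c • u) = c • T u)
    (hTclosed : IsClosed {p : V × V | p.1 ∈ D ∧ p.2 = T p.1}) :
    IsOpen (rhoSB T (D : Set V) Bc) := by
  rw [isOpen_iff_mem_nhds]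
  rintro s ⟨R, hR⟩
  obtain ⟨A, hA⟩ := exists_continuousLinearMap_comp_of_isClosed T D hTadd hTsmul hTclosed R
    fun v => (hR.1 v).1.1
  let M : Quaternion ℝ → V →L[ℝ] V := fun q =>
    1 - (2 * (q.re - s.re)) • A + (‖q‖ ^ 2 - ‖s‖ ^ 2) • R
  have hMcont : Continuous M := by
    have := Quaternion.continuous_re
    fun_prop
  have hMs : IsUnit (M s) := by simp [M]
  filter_upwards [(Units.isOpen.preimage hMcont).mem_nhds hMs] with q hq
  refine mem_rhoSB_of_isUnit hR (fun v => ?_) hq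
  rw [Qq_apply_of_Qq_eq T s q (hR.2.1 v), ← hA]
  rfl

/-- `ρ_{S,B}(T)` is open in `ℍ` and axially symmetric. -/
theorem stmt7 {V : Type*} [NormedAddCommGroup V] [NormedSpace ℝ V] [CompleteSpace V]
    (P : QuatBimodule V) (T : V → V) (D Bc : Submodule ℝ V)
    (hBD : (Bc : Set V) ⊆ (D : Set V))
    (hDrm : ∀ (a : Quaternion ℝ), ∀ v ∈ D, P.rm a v ∈ D)
    (hBrm : ∀ (a : Quaternion ℝ), ∀ v ∈ Bc, P.rm a v ∈ Bc)
    (hTadd : ∀ u ∈ D, ∀ v ∈ D, T (u + v) = T u + T v)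
    (hTsmul : ∀ (c : ℝ), ∀ u ∈ D, T (c • u) = c • T u)
    (hTrm : ∀ (a : Quaternion ℝ), ∀ u ∈ D, T (P.rm a u) = P.rm a (T u))
    (hTclosed : IsClosed {p : V × V | p.1 ∈ D ∧ p.2 = T p.1}) :
    IsOpen (rhoSB T (D : Set V) (Bc : Set V)) ∧
      ∀ s ∈ rhoSB T (D : Set V) (Bc : Set V), ∀ q : Quaternion ℝ,
        q.re = s.re → ‖q‖ = ‖s‖ → q ∈ rhoSB T (D : Set V) (Bc : Set V) :=
  ⟨isOpen_rhoSB T D Bc hTadd hTsmul hTclosed,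
    fun _ hs _ hre hnorm => mem_rhoSB_of_re_eq_of_norm_eq hs hre hnorm⟩
end

section
/- Let (x,0) ∈ ρ_B(T), write R := R_{x,0}, and let v ∈ V. If the Cauchy–Riemann identity −T(R(T(Rv))) + x·T(R(Rv)) + x·R(T(Rv)) + Rv − x²·R(Rv) = 0 holds at v, then the vector w := T(R(Rv)) − R(T(Rv)) satisfies Tw = x·w. -/
/-- necessity, real case `y = 0`: the first Cauchy–Riemann identity at `v` implies
that `w = [T, R_{x,0}] (R_{x,0} v)` is an eigenvector (possibly zero) of `T` for `x`. -/
theorem stmt14 {V : Type*} [NormedAddCommGroup V] [NormedSpace ℝ V] [CompleteSpace V]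
    (T : V → V) (D Bc : Submodule ℝ V) (hBD : (Bc : Set V) ⊆ (D : Set V))
    (hTadd : ∀ u ∈ D, ∀ v ∈ D, T (u + v) = T u + T v)
    (hTsmul : ∀ (c : ℝ), ∀ u ∈ D, T (c • u) = c • T u)
    (hTclosed : IsClosed {p : V × V | p.1 ∈ D ∧ p.2 = T p.1})
    (x : ℝ) (R : V →L[ℝ] V)
    (hR : IsInv T (D : Set V) (Bc : Set V) x 0 R)
    (v : V)
    (hCR1 : -(T (R (T (R v)))) + x • T (R (R v)) + x • R (T (R v)) + R v
        - x ^ 2 • R (R v) = 0) :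
    T (T (R (R v)) - R (T (R v))) = x • (T (R (R v)) - R (T (R v))) := by
  obtain ⟨hdom, hQ, -⟩ := hR
  have hTb : T (R (R v)) ∈ D := (hdom (R v)).1.2
  have hc : R (T (R v)) ∈ D := (hdom (T (R v))).1.1
  have hsub : T (T (R (R v)) - R (T (R v))) = T (T (R (R v))) - T (R (T (R v))) := by
    have h := hTadd _ (D.sub_mem hTb hc) _ hc
    rw [sub_add_cancel] at h
    exact eq_sub_of_add_eq h.symm
  have hQb : T (T (R (R v))) - (2 * x) • T (R (R v)) + (x ^ 2 + 0 ^ 2) • R (R v) = R v :=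
    hQ (R v)
  rw [hsub]
  linear_combination (norm := module) hCR1 + hQb
end

section
/- Suppose dom(T²) ⊆ B ⊆ dom(T). Then for every (x,y) ∈ ρ_B(T) and every v ∈ V, writing R := R_{x,y}, both Cauchy–Riemann identities hold at v: T(R(Rv)) = R(T(Rv)) and −T(R(T(Rv))) + x·T(R(Rv)) + x·R(T(Rv)) + Rv − (x²+y²)·R(Rv) = 0. -/
/-- If `dom(T²) ⊆ B`, the inverse of `Q_{x,y}` commutes with `T` on the domain of `T`. -/
theorem IsInv.map_comm {V : Type*} [NormedAddCommGroup V] [NormedSpace ℝ V]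
    {T : V → V} {D Bc : Submodule ℝ V} (hD2B : dom2 T (D : Set V) ⊆ (Bc : Set V))
    (hTadd : ∀ u ∈ D, ∀ v ∈ D, T (u + v) = T u + T v)
    (hTsmul : ∀ (c : ℝ), ∀ u ∈ D, T (c • u) = c • T u)
    {x y : ℝ} {R : V →L[ℝ] V} (hR : IsInv T (D : Set V) (Bc : Set V) x y R)
    {w : V} (hw : w ∈ D) : T (R w) = R (T w) := by
  obtain ⟨hmem, hright, hleft⟩ := hR
  obtain ⟨⟨hu, hTu⟩, -⟩ := hmem w
  have hQ := hright w
  rw [SetLike.mem_coe] at hu hTu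
  generalize R w = u at *
  unfold Qop at hQ hleft
  have hTT : T (T u) = w + ((2 * x) • T u + (-(x ^ 2 + y ^ 2)) • u) := by
    rw [← hQ]; module
  have hTu' := D.smul_mem (2 * x) hTu
  have hu' := D.smul_mem (-(x ^ 2 + y ^ 2)) hu
  have hsum := D.add_mem hTu' hu'
  have hdom : T u ∈ dom2 T (D : Set V) := by
    refine ⟨hTu, ?_⟩
    rw [SetLike.mem_coe, hTT]
    exact D.add_mem hw hsum
  have hTTT : T (T (T u)) = T w + ((2 * x) • T (T u) + (-(x ^ 2 + y ^ 2)) • T u) := by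
    conv_lhs => rw [hTT]
    rw [hTadd _ hw _ hsum, hTadd _ hTu' _ hu', hTsmul _ _ hTu, hTsmul _ _ hu]
  rw [← hleft (T u) ⟨hdom, hD2B hdom⟩, hTTT]
  congr 1
  module

/-- if `dom(T²) ⊆ B ⊆ dom(T)`, the Cauchy–Riemann identities hold at every
`v ∈ V`, for every `(x,y) ∈ ρ_B(T)` (with `R = R_{x,y}` the corresponding inverse). -/
theorem stmt15 {V : Type*} [NormedAddCommGroup V] [NormedSpace ℝ V] [CompleteSpace V]
    (T : V → V) (D Bc : Submodule ℝ V) (hBD : (Bc : Set V) ⊆ (D : Set V))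
    (hD2B : dom2 T (D : Set V) ⊆ (Bc : Set V))
    (hTadd : ∀ u ∈ D, ∀ v ∈ D, T (u + v) = T u + T v)
    (hTsmul : ∀ (c : ℝ), ∀ u ∈ D, T (c • u) = c • T u)
    (hTclosed : IsClosed {p : V × V | p.1 ∈ D ∧ p.2 = T p.1}) :
    ∀ (x y : ℝ) (R : V →L[ℝ] V), IsInv T (D : Set V) (Bc : Set V) x y R →
      ∀ v : V,
        T (R (R v)) = R (T (R v)) ∧
          -(T (R (T (R v)))) + x • T (R (R v)) + x • R (T (R v)) + R v
            - (x ^ 2 + y ^ 2) • R (R v) = 0 := by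
  intro x y R hR v
  have hcomm : T (R (R v)) = R (T (R v)) := hR.map_comm hD2B hTadd hTsmul (hR.1 v).1.1
  refine ⟨hcomm, ?_⟩
  have hQ := hR.2.1 (R v)
  unfold Qop at hQ
  rw [← hcomm]
  generalize R (R v) = p at *
  rw [← hQ]
  module
end

section
/- Suppose dom(T²) ⊆ B ⊆ dom(T). Then for every (x,y) ∈ ρ_B(T) and every w ∈ dom(T) one has T(R_{x,y}w) = R_{x,y}(Tw). -/
/-- if `dom(T²) ⊆ B ⊆ dom(T)`, then `T` and `R_{x,y}` commute on `dom(T)`,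
for every `(x,y) ∈ ρ_B(T)` (with `R = R_{x,y}` the corresponding inverse). -/
theorem stmt16 {V : Type*} [NormedAddCommGroup V] [NormedSpace ℝ V] [CompleteSpace V]
    (T : V → V) (D Bc : Submodule ℝ V) (hBD : (Bc : Set V) ⊆ (D : Set V))
    (hD2B : dom2 T (D : Set V) ⊆ (Bc : Set V))
    (hTadd : ∀ u ∈ D, ∀ v ∈ D, T (u + v) = T u + T v)
    (hTsmul : ∀ (c : ℝ), ∀ u ∈ D, T (c • u) = c • T u)
    (hTclosed : IsClosed {p : V × V | p.1 ∈ D ∧ p.2 = T p.1}) :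
    ∀ (x y : ℝ) (R : V →L[ℝ] V), IsInv T (D : Set V) (Bc : Set V) x y R →
      ∀ w ∈ D, T (R w) = R (T w) := by
  intro x y R ⟨hmem, hright, hleft⟩ w hw
  obtain ⟨⟨hu, hTu⟩, -⟩ := hmem w
  have hQ := hright w
  set u := R w
  unfold Qop at hQ
  have hTTu : T (T u) = w + ((2 * x) • T u + (-(x ^ 2 + y ^ 2)) • u) := by
    linear_combination (norm := module) hQ
  have hxTu := D.smul_mem (2 * x) hTu
  have hyu := D.smul_mem (-(x ^ 2 + y ^ 2)) hu
  have hTTu_mem : T (T u) ∈ D := hTTu ▸ D.add_mem hw (D.add_mem hxTu hyu)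
  have hTu_dom : T u ∈ dom2 T (D : Set V) := ⟨hTu, hTTu_mem⟩
  have hTTTu : T (T (T u)) = T w + ((2 * x) • T (T u) + (-(x ^ 2 + y ^ 2)) • T u) := by
    conv_lhs => rw [hTTu]
    rw [hTadd _ hw _ (D.add_mem hxTu hyu), hTadd _ hxTu _ hyu, hTsmul _ _ hTu, hTsmul _ _ hu]
  have hQTu : Qop T x y (T u) = T w := by
    rw [Qop, hTTTu]
    module
  rw [← hQTu, hleft _ ⟨hTu_dom, hD2B hTu_dom⟩]
end

section
/- (Left S-resolvent equation.) For every s ∈ ρ_{S,B}(T) and every v ∈ V one has S_{L,B}^{-1}(s,T)(s·v) − T(S_{L,B}^{-1}(s,T)v) = v. -/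
/-- left `S`-resolvent equation: for `s ∈ ρ_{S,B}(T)` with inverse
`R = Q_{s,B}[T]⁻¹`, and `S_{L,B}^{-1}(s,T)v = R(s̄·v) − T(Rv)`, one has
`S_{L,B}^{-1}(s,T)(s·v) − T(S_{L,B}^{-1}(s,T)v) = v` for all `v ∈ V`. -/
theorem stmt17 {V : Type*} [NormedAddCommGroup V] [NormedSpace ℝ V] [CompleteSpace V]
    (P : QuatBimodule V) (T : V → V) (D Bc : Submodule ℝ V)
    (hBD : (Bc : Set V) ⊆ (D : Set V))
    (hDrm : ∀ (a : Quaternion ℝ), ∀ v ∈ D, P.rm a v ∈ D)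
    (hBrm : ∀ (a : Quaternion ℝ), ∀ v ∈ Bc, P.rm a v ∈ Bc)
    (hTadd : ∀ u ∈ D, ∀ v ∈ D, T (u + v) = T u + T v)
    (hTsmul : ∀ (c : ℝ), ∀ u ∈ D, T (c • u) = c • T u)
    (hTrm : ∀ (a : Quaternion ℝ), ∀ u ∈ D, T (P.rm a u) = P.rm a (T u))
    (hTclosed : IsClosed {p : V × V | p.1 ∈ D ∧ p.2 = T p.1})
    (s : Quaternion ℝ) (R : V →L[ℝ] V)
    (hR : IsInvQ T (D : Set V) (Bc : Set V) s R) :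
    ∀ v : V,
      (R (P.lm (star s) (P.lm s v)) - T (R (P.lm s v)))
          - T (R (P.lm (star s) v) - T (R v)) = v := by
  obtain ⟨hdom, hQ, -⟩ := hR
  intro v
  have hD : ∀ w, R w ∈ D := fun w => (hdom w).1.1
  have hTD : T (R v) ∈ D := (hdom v).1.2
  have hT_sub : T (R (P.lm (star s) v) - T (R v)) = T (R (P.lm (star s) v)) - T (T (R v)) := by
    have h := hTadd _ (D.sub_mem (hD (P.lm (star s) v)) hTD) _ hTD
    rw [sub_add_cancel] at h
    exact eq_sub_of_add_eq h.symm
  have h_normSq : P.lm (star s) (P.lm s v) = (‖s‖ ^ 2) • v := by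
    rw [← P.lm_mul, Quaternion.star_mul_self, P.lm_real, Quaternion.normSq_eq_norm_mul_self, sq]
  have h_trace : P.lm s v + P.lm (star s) v = (2 * s.re) • v := by
    rw [← P.lm_add, Quaternion.self_add_star, ← P.lm_real]
    push_cast
    rfl
  have hT_trace : T (R (P.lm s v)) + T (R (P.lm (star s) v)) = (2 * s.re) • T (R v) := by
    rw [← hTadd _ (hD _) _ (hD _), ← map_add, h_trace, map_smul, hTsmul _ _ (hD v)]
  rw [hT_sub, h_normSq, map_smul]
  calc _ = T (T (R v)) - (T (R (P.lm s v)) + T (R (P.lm (star s) v))) + (‖s‖ ^ 2) • R v := by abel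
    _ = Qq T s (R v) := by rw [hT_trace, Qq]
    _ = v := hQ v
end

section
/- (Right S-resolvent equation.) For every s ∈ ρ_{S,B}(T) and every v ∈ dom(T) one has s·(S_{R,B}^{-1}(s,T)v) − S_{R,B}^{-1}(s,T)(Tv) = v + s̄·([T,Q_{s,B}[T]^{-1}]v) − T([T,Q_{s,B}[T]^{-1}]v), where [T,Q_{s,B}[T]^{-1}]v := T(Q_{s,B}[T]^{-1}v) − Q_{s,B}[T]^{-1}(Tv), a vector belonging to dom(T). -/
/-- right `S`-resolvent equation with boundary conditions: for
`s ∈ ρ_{S,B}(T)` with inverse `R = Q_{s,B}[T]⁻¹`, `S_{R,B}^{-1}(s,T)v = s̄·(Rv) − T(Rv)`,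
and the commutator `[T,R]v = T(Rv) − R(Tv)`, one has, for `v ∈ dom(T)`,
`s·(S_R v) − S_R (Tv) = v + s̄·([T,R]v) − T([T,R]v)`. -/
theorem stmt18 {V : Type*} [NormedAddCommGroup V] [NormedSpace ℝ V] [CompleteSpace V]
    (P : QuatBimodule V) (T : V → V) (D Bc : Submodule ℝ V)
    (hBD : (Bc : Set V) ⊆ (D : Set V))
    (hDrm : ∀ (a : Quaternion ℝ), ∀ v ∈ D, P.rm a v ∈ D)
    (hBrm : ∀ (a : Quaternion ℝ), ∀ v ∈ Bc, P.rm a v ∈ Bc)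
    (hTadd : ∀ u ∈ D, ∀ v ∈ D, T (u + v) = T u + T v)
    (hTsmul : ∀ (c : ℝ), ∀ u ∈ D, T (c • u) = c • T u)
    (hTrm : ∀ (a : Quaternion ℝ), ∀ u ∈ D, T (P.rm a u) = P.rm a (T u))
    (hTclosed : IsClosed {p : V × V | p.1 ∈ D ∧ p.2 = T p.1})
    (s : Quaternion ℝ) (R : V →L[ℝ] V)
    (hR : IsInvQ T (D : Set V) (Bc : Set V) s R) :
    ∀ v ∈ D,
      P.lm s (P.lm (star s) (R v) - T (R v)) - (P.lm (star s) (R (T v)) - T (R (T v)))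
        = v + P.lm (star s) (T (R v) - R (T v)) - T (T (R v) - R (T v)) := by
  intro v _
  obtain ⟨hdom, hQ, -⟩ := hR
  obtain ⟨⟨-, hTRD⟩, -⟩ := hdom v
  obtain ⟨⟨hRTD, -⟩, -⟩ := hdom (T v)
  have T_sub : T (T (R v) - R (T v)) = T (T (R v)) - T (R (T v)) := by
    have h := hTadd _ hTRD _ (D.smul_mem (-1) hRTD)
    rw [hTsmul _ _ hRTD] at h
    simpa [sub_eq_add_neg] using h
  have s_mul_star : P.lm s (P.lm (star s) (R v)) = (‖s‖ ^ 2) • R v := by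
    rw [← P.lm_mul, Quaternion.self_mul_star, P.lm_real, Quaternion.normSq_eq_norm_mul_self, sq]
  have s_add_star :
      P.lm s (T (R v)) + P.lm (star s) (T (R v)) = (2 * s.re) • T (R v) := by
    rw [← P.lm_add, Quaternion.self_add_star, ← P.lm_real]
    push_cast
    rfl
  have hv : T (T (R v)) - (2 * s.re) • T (R v) + (‖s‖ ^ 2) • R v = v := hQ v
  rw [T_sub, map_sub, map_sub, s_mul_star]
  rw [← s_add_star, ← sub_eq_zero] at hv
  rw [← sub_eq_zero, ← hv]
  abel
end

section
/- (S-resolvent equation with boundary conditions.) Let s, q ∈ ρ_{S,B}(T) and suppose the quaternion σ := q² − 2(Re s)·q + |s|² is nonzero (equivalently, s does not lie on the sphere [q] of quaternions with the same real part and the same modulus as q). Then for every v ∈ V, setting w := σ^{-1}·v, u := [T,Q_{s,B}[T]^{-1}](S_{L,B}^{-1}(q,T)w) and u' := [T,Q_{s,B}[T]^{-1}](S_{L,B}^{-1}(q,T)(q·w)), one has: S_{R,B}^{-1}(s,T)(S_{L,B}^{-1}(q,T)v) = (S_{R,B}^{-1}(s,T) − S_{L,B}^{-1}(q,T))(q·w)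 − s̄·((S_{R,B}^{-1}(s,T) − S_{L,B}^{-1}(q,T))w) + s̄·(s̄·u − Tu) − (s̄·u' − Tu'). -/
namespace QuatBimodule

variable {V : Type*} [NormedAddCommGroup V] [NormedSpace ℝ V] (P : QuatBimodule V)

lemma lm_star_lm (a : Quaternion ℝ) (v : V) : P.lm (star a) (P.lm a v) = (‖a‖ ^ 2) • v := by
  rw [← P.lm_mul, Quaternion.star_mul_self, P.lm_real, Quaternion.normSq_eq_norm_mul_self, sq]

lemma lm_add_lm_star (a : Quaternion ℝ) (v : V) :
    P.lm a v + P.lm (star a) v = (2 * a.re) • v := by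
  rw [← P.lm_add, Quaternion.self_add_star', P.lm_real]

end QuatBimodule

section Resolvent

variable {V : Type*} [NormedAddCommGroup V] [NormedSpace ℝ V] {P : QuatBimodule V}
  {T : V → V} {D : Submodule ℝ V} {Bc : Set V} {s : Quaternion ℝ} {R : V →L[ℝ] V}

lemma map_sub_of_map_add (hTadd : ∀ u ∈ D, ∀ v ∈ D, T (u + v) = T u + T v)
    {u v : V} (hu : u ∈ D) (hv : v ∈ D) : T (u - v) = T u - T v := by
  have h := hTadd (u - v) (D.sub_mem hu hv) v hv
  rw [sub_add_cancel] at h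
  rw [h, add_sub_cancel_right]

namespace IsInvQ

lemma apply_mem (hR : IsInvQ T (D : Set V) Bc s R) (z : V) : R z ∈ D := (hR.1 z).1.1

lemma map_apply_mem (hR : IsInvQ T (D : Set V) Bc s R) (z : V) : T (R z) ∈ D := (hR.1 z).1.2

lemma map_map_apply (hR : IsInvQ T (D : Set V) Bc s R) (z : V) :
    T (T (R z)) = z + (2 * s.re) • T (R z) - (‖s‖ ^ 2) • R z := by
  have h := hR.2.1 z
  unfold Qq at h
  nth_rewrite 2 [← h]
  abel

/-- The left `S`-resolvent equation `T S_L⁻¹(s) z = S_L⁻¹(s) (s z) - z`. -/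
lemma map_leftResolvent (hTadd : ∀ u ∈ D, ∀ v ∈ D, T (u + v) = T u + T v)
    (hTsmul : ∀ (c : ℝ), ∀ u ∈ D, T (c • u) = c • T u)
    (hR : IsInvQ T (D : Set V) Bc s R) (z : V) :
    T (R (P.lm (star s) z) - T (R z)) =
      R (P.lm (star s) (P.lm s z)) - T (R (P.lm s z)) - z := by
  have h : T (R (P.lm s z)) + T (R (P.lm (star s) z)) = (2 * s.re) • T (R z) := by
    rw [← hTadd _ (hR.apply_mem _) _ (hR.apply_mem _), ← map_add, P.lm_add_lm_star, map_smul,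
      hTsmul _ _ (hR.apply_mem _)]
  rw [map_sub_of_map_add hTadd (hR.apply_mem _) (hR.map_apply_mem _), hR.map_map_apply,
    P.lm_star_lm, map_smul, ← h]
  abel

/-- Applying `s̄ - T` to the vector `[T, Q_s⁻¹] a`, with `b` in the place of `T a`. -/
lemma star_sub_map_commutator (hTadd : ∀ u ∈ D, ∀ v ∈ D, T (u + v) = T u + T v)
    (hR : IsInvQ T (D : Set V) Bc s R) (a b : V) :
    P.lm (star s) (T (R a) - R b) - T (T (R a) - R b) =
      P.lm s (P.lm (star s) (R a) - T (R a)) - (P.lm (star s) (R b) - T (R b)) - a := by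
  have h : P.lm s (P.lm (star s) (R a)) = (‖s‖ ^ 2) • R a := by
    simpa using P.lm_star_lm (star s) (R a)
  rw [map_sub_of_map_add hTadd (hR.map_apply_mem _) (hR.apply_mem _), hR.map_map_apply,
    map_sub, map_sub, h, ← P.lm_add_lm_star]
  abel

end IsInvQ

end Resolvent

/-- `S`-resolvent equation with boundary conditions: for `s, q ∈ ρ_{S,B}(T)`
with inverses `Rs = Q_{s,B}[T]⁻¹`, `Rq = Q_{q,B}[T]⁻¹`, with `σ = q² − 2(Re s)q + |s|² ≠ 0`,
`w = σ⁻¹·v`, `u = [T,Q_{s,B}[T]⁻¹](S_{L,B}^{-1}(q,T)w)` and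
`u' = [T,Q_{s,B}[T]⁻¹](S_{L,B}^{-1}(q,T)(q·w))`, one has
`S_{R,B}^{-1}(s,T)(S_{L,B}^{-1}(q,T)v) = (S_R(s) − S_L(q))(q·w) − s̄·((S_R(s) − S_L(q))w)
 + s̄·(s̄·u − Tu) − (s̄·u' − Tu')`. -/
theorem stmt19 {V : Type*} [NormedAddCommGroup V] [NormedSpace ℝ V] [CompleteSpace V]
    (P : QuatBimodule V) (T : V → V) (D Bc : Submodule ℝ V)
    (hBD : (Bc : Set V) ⊆ (D : Set V))
    (hDrm : ∀ (a : Quaternion ℝ), ∀ v ∈ D, P.rm a v ∈ D)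
    (hBrm : ∀ (a : Quaternion ℝ), ∀ v ∈ Bc, P.rm a v ∈ Bc)
    (hTadd : ∀ u ∈ D, ∀ v ∈ D, T (u + v) = T u + T v)
    (hTsmul : ∀ (c : ℝ), ∀ u ∈ D, T (c • u) = c • T u)
    (hTrm : ∀ (a : Quaternion ℝ), ∀ u ∈ D, T (P.rm a u) = P.rm a (T u))
    (hTclosed : IsClosed {p : V × V | p.1 ∈ D ∧ p.2 = T p.1})
    (s q : Quaternion ℝ) (Rs Rq : V →L[ℝ] V)
    (hRs : IsInvQ T (D : Set V) (Bc : Set V) s Rs)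
    (hRq : IsInvQ T (D : Set V) (Bc : Set V) q Rq)
    -- the left `S`-resolvent operator at `q` and the right one at `s`
    (SLq SRs : V → V)
    (hSLq : ∀ z : V, SLq z = Rq (P.lm (star q) z) - T (Rq z))
    (hSRs : ∀ z : V, SRs z = P.lm (star s) (Rs z) - T (Rs z))
    -- the commutator `[T, Q_{s,B}[T]⁻¹]`
    (comm : V → V) (hcomm : ∀ z : V, comm z = T (Rs z) - Rs (T z))
    (σ : Quaternion ℝ)
    (hσdef : σ = q * q - ((2 * s.re : ℝ) : Quaternion ℝ) * q + ((‖s‖ ^ 2 : ℝ) : Quaternion ℝ))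
    (hσ : σ ≠ 0)
    (v w u u' : V)
    (hw : w = P.lm σ⁻¹ v)
    (hu : u = comm (SLq w))
    (hu' : u' = comm (SLq (P.lm q w))) :
    SRs (SLq v)
      = (SRs (P.lm q w) - SLq (P.lm q w)) - P.lm (star s) (SRs w - SLq w)
        + P.lm (star s) (P.lm (star s) u - T u) - (P.lm (star s) u' - T u') := by
  have hSL_T (z : V) : T (SLq z) = SLq (P.lm q z) - z := by
    simp only [hSLq]
    exact hRq.map_leftResolvent hTadd hTsmul z
  have hcommS (z t : V) (ht : T (SLq z) = t) :
      P.lm (star s) (comm (SLq z)) - T (comm (SLq z)) =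
        P.lm s (SRs (SLq z)) - SRs t - SLq z := by
    rw [hcomm, ht, hSRs, hSRs]
    exact hRs.star_sub_map_commutator hTadd _ _
  have hSR_add (x y : V) : SRs (x + y) = SRs x + SRs y := by
    simp only [hSRs, map_add, hTadd _ (hRs.apply_mem x) _ (hRs.apply_mem y)]
    abel
  have hSR_smul (c : ℝ) (x : V) : SRs (c • x) = c • SRs x := by
    simp only [hSRs, map_smul, hTsmul c _ (hRs.apply_mem x), smul_sub]
  have hSR_sub (x y : V) : SRs (x - y) = SRs x - SRs y := by
    rw [eq_sub_iff_add_eq, ← hSR_add, sub_add_cancel]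
  have hSL_add (x y : V) : SLq (x + y) = SLq x + SLq y := by
    simp only [hSLq, map_add, hTadd _ (hRq.apply_mem x) _ (hRq.apply_mem y)]
    abel
  have hSL_smul (c : ℝ) (x : V) : SLq (c • x) = c • SLq x := by
    simp only [hSLq, map_smul, hTsmul c _ (hRq.apply_mem x), smul_sub]
  have hv : v + (2 * s.re) • P.lm q w = P.lm q (P.lm q w) + (‖s‖ ^ 2) • w := by
    have h1 : v = P.lm σ w := by
      have h := P.lm_real 1 v
      rw [hw, ← P.lm_mul, mul_inv_cancel₀ hσ]
      simpa using h.symm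
    have h2 : σ + ((2 * s.re : ℝ) : Quaternion ℝ) * q
        = q * q + ((‖s‖ ^ 2 : ℝ) : Quaternion ℝ) := by
      rw [hσdef]
      abel
    rw [h1, ← P.lm_real (2 * s.re), ← P.lm_mul, ← P.lm_add, h2, P.lm_add, P.lm_mul, P.lm_real]
  have hSRv : SRs (SLq v) = SRs (SLq (P.lm q (P.lm q w)))
      - (2 * s.re) • SRs (SLq (P.lm q w)) + (‖s‖ ^ 2) • SRs (SLq w) := by
    have h := congrArg (fun x => SRs (SLq x)) hv
    simp only [hSL_add, hSL_smul, hSR_add, hSR_smul] at h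
    rw [eq_sub_of_add_eq h]
    abel
  rw [hu, hu', hcommS _ _ (hSL_T w), hcommS _ _ (hSL_T (P.lm q w)), hSRv]
  simp only [map_sub, hSR_sub, P.lm_star_lm, ← P.lm_add_lm_star]
  abel
end
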